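/- arXiv:1110.4622 — 2 statements merged into one kernel-verified Lean document; each statement's English description precedes it below -/
import Mathlib

section
/- Comparison of the rate functionals with and without interaction: for every β ≥ 0 and every π : [0,T] × [-1,1] → [0,1] which is continuous and continuously differentiable in the space variable u with ∂_u π continuous on [0,T] × [-1,1], (1/2) Î^0(π) - (β²/16) ∫_0^T ∫_{-1}^{1} (∂_u π)² du dt ≤ Î^β(π) ≤ 2 Î^0(π) + (β²/8) ∫_0^T ∫_{-1}^{1} (∂_u π)² du dt. -/
open MeasureTheory Set
open scoped ENNReal

noncomputable section

/-- The Neumann (reflected) Kac kernel. -/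
def Jneum (j : ℝ → ℝ) (u v : ℝ) : ℝ := j (v - u) + j (2 - v - u) + j (-2 - v - u)

/-- Convolution with the Neumann kernel: `(J^neum ⋆ m)(u) = ∫_{-1}^1 J^neum(u,v) m(v) dv`. -/
def convJ (j m : ℝ → ℝ) (u : ℝ) : ℝ := ∫ v in (-1:ℝ)..1, Jneum j u v * m v

/-- Mobility `σ(ρ) = 2ρ(1-ρ)`. -/
def sigmaMob (ρ : ℝ) : ℝ := 2 * ρ * (1 - ρ)

/-- Test functions for the rate functional: `C¹` in time, `C²` in space (with jointly
continuous derivatives), vanishing at the spatial boundary `±1`. -/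
def RateTest (G : ℝ → ℝ → ℝ) : Prop :=
  Continuous (Function.uncurry G) ∧
  (∀ u : ℝ, ContDiff ℝ 1 (fun t => G t u)) ∧
  (∀ t : ℝ, ContDiff ℝ 2 (fun u => G t u)) ∧
  Continuous (Function.uncurry fun t u => deriv (fun s => G s u) t) ∧
  Continuous (Function.uncurry fun t u => deriv (fun w => G t w) u) ∧
  Continuous (Function.uncurry fun t u => deriv (deriv (fun w => G t w)) u) ∧
  (∀ t : ℝ, G t (-1) = 0 ∧ G t 1 = 0)

/-- The linear part `ℓ_G^β(π)` of the rate functional. -/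
def ellG (j : ℝ → ℝ) (β ρm ρp T : ℝ) (π G : ℝ → ℝ → ℝ) : ℝ :=
  (∫ u in (-1:ℝ)..1, π T u * G T u) - (∫ u in (-1:ℝ)..1, π 0 u * G 0 u)
  - (∫ t in (0:ℝ)..T, ∫ u in (-1:ℝ)..1, π t u * deriv (fun s => G s u) t)
  - (∫ t in (0:ℝ)..T, ∫ u in (-1:ℝ)..1, π t u * deriv (deriv (fun w => G t w)) u)
  + ρp * (∫ t in (0:ℝ)..T, deriv (fun w => G t w) 1)
  - ρm * (∫ t in (0:ℝ)..T, deriv (fun w => G t w) (-1))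
  - (β/2) * ∫ t in (0:ℝ)..T, ∫ u in (-1:ℝ)..1,
      sigmaMob (π t u) * (deriv (fun w => G t w) u * deriv (convJ j (fun v => π t v)) u)

/-- The functional `𝒥_G^β(π) = ℓ_G^β(π) - (1/2) ∫∫ σ(π) (∂_u G)²`. -/
def JG (j : ℝ → ℝ) (β ρm ρp T : ℝ) (π G : ℝ → ℝ → ℝ) : ℝ :=
  ellG j β ρm ρp T π G -
    (1/2) * ∫ t in (0:ℝ)..T, ∫ u in (-1:ℝ)..1,
      sigmaMob (π t u) * (deriv (fun w => G t w) u)^2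

/-- The rate functional `Î^β(π) = sup_G 𝒥_G^β(π)`, valued in `[0,+∞]`. -/
def Ihat (j : ℝ → ℝ) (β ρm ρp T : ℝ) (π : ℝ → ℝ → ℝ) : ℝ≥0∞ :=
  ⨆ (G : ℝ → ℝ → ℝ) (_ : RateTest G), ENNReal.ofReal (JG j β ρm ρp T π G)

lemma aux_hasDerivAt (F F' : ℝ → ℝ → ℝ) (hF : Continuous (Function.uncurry F))
    (hF' : Continuous (Function.uncurry F'))
    (h : ∀ x v, HasDerivAt (fun x => F x v) (F' x v) x) (x : ℝ) :
    HasDerivAt (fun x => ∫ v in (-1:ℝ)..1, F x v) (∫ v in (-1:ℝ)..1, F' x v) x := by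
  obtain ⟨C, hC⟩ := (isCompact_Icc.prod isCompact_Icc :
    IsCompact (Icc (x-1) (x+1) ×ˢ Icc (-1:ℝ) 1)).exists_bound_of_continuousOn hF'.continuousOn
  have c1 : ∀ y, Continuous (F y) := fun y => by
    have := hF.comp (Continuous.prodMk_right y); exact this
  have c2 : ∀ y, Continuous (F' y) := fun y => by
    have := hF'.comp (Continuous.prodMk_right y); exact this
  refine (intervalIntegral.hasDerivAt_integral_of_dominated_loc_of_deriv_le
    (s := Icc (x-1) (x+1)) (bound := fun _ => C)
    (Icc_mem_nhds (by linarith) (by linarith)) ?_ ?_ ?_ ?_ ?_ ?_).2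
  · exact Filter.Eventually.of_forall fun y => (c1 y).aestronglyMeasurable
  · exact (c1 x).intervalIntegrable _ _
  · exact (c2 x).aestronglyMeasurable
  · refine Filter.Eventually.of_forall fun v hv y hy => ?_
    rw [uIoc_of_le (by norm_num)] at hv
    exact hC (y, v) ⟨hy, hv.1.le, hv.2⟩
  · exact intervalIntegrable_const
  · exact Filter.Eventually.of_forall fun v _ y _ => h y v

def Kneum (j : ℝ → ℝ) (u v : ℝ) : ℝ := j (v - u) - j (2 - v - u) - j (-2 - v - u)

lemma aux_deriv (j m : ℝ → ℝ) (hj : ContDiff ℝ 1 j) (hm : ContDiff ℝ 1 m)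
    (hs : ∀ u : ℝ, 1 < |u| → j u = 0) (u : ℝ) (hu : u ∈ Icc (-1:ℝ) 1) :
    deriv (convJ j m) u = ∫ v in (-1:ℝ)..1, Kneum j u v * deriv m v := by
  have hjc := hj.continuous
  have hjc' : Continuous (deriv j) := hj.continuous_deriv le_rfl
  have hmc := hm.continuous
  have hmc' : Continuous (deriv m) := hm.continuous_deriv le_rfl
  have hjd : ∀ x, HasDerivAt j (deriv j x) x :=
    fun x => (hj.differentiable one_ne_zero x).hasDerivAt
  have hmd : ∀ x, HasDerivAt m (deriv m x) x :=
    fun x => (hm.differentiable one_ne_zero x).hasDerivAt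
  have h1 := aux_hasDerivAt (fun u v => Jneum j u v * m v)
    (fun u v => -(deriv j (v - u) + deriv j (2 - v - u) + deriv j (-2 - v - u)) * m v)
    (by unfold Jneum Function.uncurry; fun_prop) (by unfold Function.uncurry; fun_prop)
    (by
      intro x v
      refine HasDerivAt.mul_const ?_ _
      have a1 := (hjd (v - x)).comp x ((hasDerivAt_id x).const_sub v)
      have a2 := (hjd (2 - v - x)).comp x ((hasDerivAt_id x).const_sub (2 - v))
      have a3 := (hjd (-2 - v - x)).comp x ((hasDerivAt_id x).const_sub (-2 - v))
      have := (a1.add a2).add a3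
      refine HasDerivAt.congr_deriv (f := fun x => Jneum j x v) this ?_
      ring) u
  have h2 : deriv (convJ j m) u = _ := h1.deriv
  rw [h2]
  have h3 := intervalIntegral.integral_mul_deriv_eq_deriv_mul (a := -1) (b := 1)
    (u := fun v => Kneum j u v) (v := m)
    (u' := fun v => (deriv j (v - u) + deriv j (2 - v - u) + deriv j (-2 - v - u)))
    (v' := deriv m)
    (by
      intro v _
      have a1 := (hjd (v - u)).comp v ((hasDerivAt_id v).sub_const u)
      have a2 := (hjd (2 - v - u)).comp v (((hasDerivAt_id v).const_sub 2).sub_const u)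
      have a3 := (hjd (-2 - v - u)).comp v (((hasDerivAt_id v).const_sub (-2)).sub_const u)
      have := (a1.sub a2).sub a3
      refine HasDerivAt.congr_deriv (f := fun v => Kneum j u v) this ?_
      ring)
    (fun v _ => hmd v)
    (Continuous.intervalIntegrable (by fun_prop) _ _)
    (hmc'.intervalIntegrable _ _)
  rw [h3]
  have e1 : Kneum j u 1 = 0 := by
    have : j (-2 - 1 - u) = 0 := hs _ (by rw [abs_of_neg] <;> linarith [hu.1])
    unfold Kneum
    rw [this]; norm_num
  have e2 : Kneum j u (-1) = 0 := by
    have : j (2 - -1 - u) = 0 := hs _ (by rw [abs_of_pos] <;> linarith [hu.2])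
    unfold Kneum
    rw [this]; norm_num
  rw [e1, e2, ← sub_eq_zero]
  simp only [neg_mul, intervalIntegral.integral_neg]
  ring

lemma aux_mass (j : ℝ → ℝ) (hjc : Continuous j)
    (hs : ∀ u : ℝ, 1 < |u| → j u = 0) (hi : (∫ u : ℝ, j u) = 1) (u : ℝ)
    (hu : u ∈ Icc (-1:ℝ) 1) : (∫ v in (-1:ℝ)..1, Jneum j u v) = 1 := by
  have ii : ∀ a b, IntervalIntegrable j volume a b := fun a b => hjc.intervalIntegrable a b
  have : (∫ v in (-1:ℝ)..1, Jneum j u v) =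
      (∫ v in (-1:ℝ)..1, j (v - u)) + (∫ v in (-1:ℝ)..1, j (2 - u - v))
        + ∫ v in (-1:ℝ)..1, j (-2 - u - v) := by
    rw [← intervalIntegral.integral_add, ← intervalIntegral.integral_add]
    · unfold Jneum
      simp only [sub_right_comm _ u]
    all_goals exact Continuous.intervalIntegrable (by fun_prop) _ _
  rw [this, intervalIntegral.integral_comp_sub_right (fun x => j x),
    intervalIntegral.integral_comp_sub_left (fun x => j x),
    intervalIntegral.integral_comp_sub_left (fun x => j x)]
  have e1 : (2 - u - 1 : ℝ) = 1 - u := by ring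
  have e2 : (-2 - u - -1 : ℝ) = -1 - u := by ring
  rw [e1, e2, intervalIntegral.integral_add_adjacent_intervals (ii _ _) (ii _ _), add_comm,
    intervalIntegral.integral_add_adjacent_intervals (ii _ _) (ii _ _), ← hi]
  apply intervalIntegral.integral_eq_integral_of_support_subset
  intro x hx
  have hx' : |x| ≤ 1 := by
    by_contra h
    exact hx (hs x (not_le.1 h))
  rw [abs_le] at hx'
  constructor <;> linarith [hx'.1, hx'.2, hu.1, hu.2]

lemma aux_symm (j : ℝ → ℝ) (he : ∀ u, j (-u) = j u) (u v : ℝ) : Jneum j u v = Jneum j v u := by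
  unfold Jneum
  rw [← he (v - u)]
  congr 2 <;> ring_nf

lemma aux_sq (j : ℝ → ℝ) (hjc : Continuous j) (h0 : ∀ u, 0 ≤ j u)
    (hs : ∀ u : ℝ, 1 < |u| → j u = 0) (hi : (∫ u : ℝ, j u) = 1) (f : ℝ → ℝ) (hf : Continuous f)
    (u : ℝ) (hu : u ∈ Icc (-1:ℝ) 1) :
    (∫ v in (-1:ℝ)..1, Kneum j u v * f v) ^ 2 ≤ ∫ v in (-1:ℝ)..1, Jneum j u v * f v ^ 2 := by
  set D := ∫ v in (-1:ℝ)..1, Kneum j u v * f v with hD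
  have hm := aux_mass j hjc hs hi u hu
  have cJ : Continuous (fun v => Jneum j u v) := by unfold Jneum; fun_prop
  have cK : Continuous (fun v => Kneum j u v) := by unfold Kneum; fun_prop
  have key : 0 ≤ ∫ v in (-1:ℝ)..1, (Jneum j u v * f v ^ 2 - 2 * D * (Kneum j u v * f v)
      + D ^ 2 * Jneum j u v) := by
    apply intervalIntegral.integral_nonneg (by norm_num)
    intro v _
    have a := h0 (v - u)
    have b := h0 (2 - v - u)
    have c := h0 (-2 - v - u)
    unfold Jneum Kneum
    nlinarith [mul_nonneg a (sq_nonneg (f v - D)), mul_nonneg b (sq_nonneg (f v + D)),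
      mul_nonneg c (sq_nonneg (f v + D))]
  rw [intervalIntegral.integral_add, intervalIntegral.integral_sub,
    intervalIntegral.integral_const_mul, intervalIntegral.integral_const_mul, hm, ← hD] at key
  · linarith
  all_goals exact Continuous.intervalIntegrable (by fun_prop) _ _

lemma aux_l2 (j : ℝ → ℝ) (hjc : Continuous j) (h0 : ∀ u, 0 ≤ j u) (he : ∀ u, j (-u) = j u)
    (hs : ∀ u : ℝ, 1 < |u| → j u = 0) (hi : (∫ u : ℝ, j u) = 1) (f : ℝ → ℝ) (hf : Continuous f) :
    (∫ u in (-1:ℝ)..1, (∫ v in (-1:ℝ)..1, Kneum j u v * f v) ^ 2)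
      ≤ ∫ v in (-1:ℝ)..1, f v ^ 2 := by
  have cJ : Continuous (Function.uncurry fun u v => Jneum j u v * f v ^ 2) := by
    unfold Jneum Function.uncurry; fun_prop
  have cK : Continuous (Function.uncurry fun u v => Kneum j u v * f v) := by
    unfold Kneum Function.uncurry; fun_prop
  have c1 : Continuous (fun u => ∫ v in (-1:ℝ)..1, Kneum j u v * f v) :=
    intervalIntegral.continuous_parametric_intervalIntegral_of_continuous' cK _ _
  have c2 : Continuous (fun u => ∫ v in (-1:ℝ)..1, Jneum j u v * f v ^ 2) :=
    intervalIntegral.continuous_parametric_intervalIntegral_of_continuous' cJ _ _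
  calc _ ≤ ∫ u in (-1:ℝ)..1, ∫ v in (-1:ℝ)..1, Jneum j u v * f v ^ 2 :=
        intervalIntegral.integral_mono_on (by norm_num) ((c1.pow 2).intervalIntegrable _ _)
          (c2.intervalIntegrable _ _) (fun u hu => aux_sq j hjc h0 hs hi f hf u hu)
    _ = ∫ v in (-1:ℝ)..1, ∫ u in (-1:ℝ)..1, Jneum j u v * f v ^ 2 := by
        apply intervalIntegral_intervalIntegral_swap
        refine (cJ.continuousOn.integrableOn_compact
          ((isCompact_uIcc (a := (-1:ℝ)) (b := 1)).prod (isCompact_uIcc (a := (-1:ℝ)) (b := 1)))).mono_set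
          (prod_mono uIoc_subset_uIcc uIoc_subset_uIcc)
    _ = ∫ v in (-1:ℝ)..1, f v ^ 2 := by
        apply intervalIntegral.integral_congr
        intro v hv
        rw [uIcc_of_le (by norm_num)] at hv
        simp only [intervalIntegral.integral_mul_const]
        have : (∫ u in (-1:ℝ)..1, Jneum j u v) = 1 := by
          refine Eq.trans ?_ (aux_mass j hjc hs hi v hv)
          exact intervalIntegral.integral_congr fun u _ => aux_symm j he u v
        rw [this, one_mul]

lemma aux_half {G : ℝ → ℝ → ℝ} (h : RateTest G) : RateTest (fun t u => (1/2) * G t u) := by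
  obtain ⟨a, b, c, d, e, f, g⟩ := h
  refine ⟨?_, ?_, ?_, ?_, ?_, ?_, ?_⟩
  · exact a.const_mul (1/2 : ℝ)
  · intro u; exact contDiff_const.mul (b u)
  · intro t; exact contDiff_const.mul (c t)
  · simp only [deriv_const_mul_field']; exact d.const_mul (1/2 : ℝ)
  · simp only [deriv_const_mul_field']; exact e.const_mul (1/2 : ℝ)
  · simp only [deriv_const_mul_field']; exact f.const_mul (1/2 : ℝ)
  · intro t; simp [g t]

lemma aux_JG (j : ℝ → ℝ) (β ρm ρp T : ℝ) (π G : ℝ → ℝ → ℝ) : JG j β ρm ρp T π G =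
    ellG j 0 ρm ρp T π G - (β/2) * (∫ t in (0:ℝ)..T, ∫ u in (-1:ℝ)..1,
      sigmaMob (π t u) * (deriv (fun w => G t w) u * deriv (convJ j (fun v => π t v)) u))
      - (1/2) * ∫ t in (0:ℝ)..T, ∫ u in (-1:ℝ)..1,
      sigmaMob (π t u) * (deriv (fun w => G t w) u)^2 := by
  unfold JG ellG
  ring

lemma aux_JG_mul (j : ℝ → ℝ) (β ρm ρp T a : ℝ) (π G : ℝ → ℝ → ℝ) :
    JG j β ρm ρp T π (fun t u => a * G t u) =
    a * ellG j 0 ρm ρp T π G - (a*β/2) * (∫ t in (0:ℝ)..T, ∫ u in (-1:ℝ)..1,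
      sigmaMob (π t u) * (deriv (fun w => G t w) u * deriv (convJ j (fun v => π t v)) u))
      - (a^2/2) * ∫ t in (0:ℝ)..T, ∫ u in (-1:ℝ)..1,
      sigmaMob (π t u) * (deriv (fun w => G t w) u)^2 := by
  rw [aux_JG]
  unfold ellG
  simp only [deriv_const_mul_field', mul_pow, mul_left_comm _ a, mul_assoc a,
    mul_left_comm _ (a^2), intervalIntegral.integral_const_mul]
  ring

lemma aux_main
    (j : ℝ → ℝ)
    (hj_smooth : ContDiff ℝ 1 j)
    (hj_nonneg : ∀ u, 0 ≤ j u)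
    (hj_even : ∀ u, j (-u) = j u)
    (hj_supp : ∀ u : ℝ, 1 < |u| → j u = 0)
    (hj_int : (∫ u : ℝ, j u) = 1)
    (T : ℝ) (hT : 0 < T) (c : ℝ)
    (π : ℝ → ℝ → ℝ)
    (hπ_cont : Continuous (Function.uncurry π))
    (hπ_u : ∀ t : ℝ, ContDiff ℝ 1 (fun u => π t u))
    (hπ_du : Continuous (Function.uncurry fun t u => deriv (fun w => π t w) u))
    (hπ_range : ∀ t ∈ Icc (0:ℝ) T, ∀ u ∈ Icc (-1:ℝ) 1, π t u ∈ Icc (0:ℝ) 1)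
    (g : ℝ → ℝ → ℝ) (hg : Continuous (Function.uncurry g)) :
    c * (∫ t in (0:ℝ)..T, ∫ u in (-1:ℝ)..1,
      sigmaMob (π t u) * (g t u * deriv (convJ j (fun v => π t v)) u))
    - (∫ t in (0:ℝ)..T, ∫ u in (-1:ℝ)..1, sigmaMob (π t u) * (g t u)^2) ≤
    c^2/8 * ∫ t in (0:ℝ)..T, ∫ u in (-1:ℝ)..1, (deriv (fun w => π t w) u)^2 := by
  have hjc := hj_smooth.continuous
  set f : ℝ → ℝ → ℝ := fun t u => deriv (fun w => π t w) u with hf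
  set D : ℝ → ℝ → ℝ := fun t u => ∫ v in (-1:ℝ)..1, Kneum j u v * f t v with hD
  have cf : Continuous (fun p : ℝ × ℝ => f p.1 p.2) := hπ_du
  have cp : Continuous (fun p : ℝ × ℝ => π p.1 p.2) := hπ_cont
  have cg : Continuous (fun p : ℝ × ℝ => g p.1 p.2) := hg
  have cD : Continuous (fun p : ℝ × ℝ => D p.1 p.2) := by
    refine intervalIntegral.continuous_parametric_intervalIntegral_of_continuous'
      (f := fun (p : ℝ × ℝ) v => Kneum j p.2 v * f p.1 v) ?_ _ _
    have : Continuous (fun q : (ℝ × ℝ) × ℝ => f q.1.1 q.2) :=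
      cf.comp (by fun_prop : Continuous fun q : (ℝ × ℝ) × ℝ => (q.1.1, q.2))
    unfold Kneum Function.uncurry
    fun_prop
  have sec : ∀ h : ℝ → ℝ → ℝ, Continuous (fun p : ℝ × ℝ => h p.1 p.2) → ∀ t, Continuous (h t) :=
    fun h hh t => hh.comp (Continuous.prodMk_right t)
  have par : ∀ h : ℝ → ℝ → ℝ, Continuous (fun p : ℝ × ℝ => h p.1 p.2) →
      Continuous (fun t => ∫ u in (-1:ℝ)..1, h t u) := fun h hh =>
    intervalIntegral.continuous_parametric_intervalIntegral_of_continuous' hh _ _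
  have e : (∫ t in (0:ℝ)..T, ∫ u in (-1:ℝ)..1,
      sigmaMob (π t u) * (g t u * deriv (convJ j (fun v => π t v)) u)) =
      ∫ t in (0:ℝ)..T, ∫ u in (-1:ℝ)..1, sigmaMob (π t u) * (g t u * D t u) := by
    congr 1; ext t
    apply intervalIntegral.integral_congr
    intro u hu
    rw [uIcc_of_le (by norm_num)] at hu
    simp only
    rw [aux_deriv j _ hj_smooth (hπ_u t) hj_supp u hu]
  have cs : Continuous (fun p : ℝ × ℝ => sigmaMob (π p.1 p.2)) := by
    unfold sigmaMob; fun_prop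
  have k1 : Continuous (fun p : ℝ × ℝ => sigmaMob (π p.1 p.2) * (g p.1 p.2 * D p.1 p.2)) := by
    fun_prop
  have k2 : Continuous (fun p : ℝ × ℝ => sigmaMob (π p.1 p.2) * (g p.1 p.2)^2) := by
    fun_prop
  have s1 := sec (fun t u => sigmaMob (π t u) * (g t u * D t u)) k1
  have s2 := sec (fun t u => sigmaMob (π t u) * (g t u)^2) k2
  have p1 := par (fun t u => sigmaMob (π t u) * (g t u * D t u)) k1
  have p2 := par (fun t u => sigmaMob (π t u) * (g t u)^2) k2
  have p3 := par (fun t u => (f t u)^2) (cf.pow 2)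
  rw [e, ← intervalIntegral.integral_const_mul, ← intervalIntegral.integral_const_mul,
    ← intervalIntegral.integral_sub ((p1.const_mul c).intervalIntegrable _ _)
      (p2.intervalIntegrable _ _)]
  apply intervalIntegral.integral_mono_on hT.le
    (((p1.const_mul c).sub p2).intervalIntegrable _ _) ((p3.const_mul _).intervalIntegrable _ _)
  intro t ht
  have l2 := aux_l2 j hjc hj_nonneg hj_even hj_supp hj_int (f t) (sec f cf t)
  refine le_trans ?_ (mul_le_mul_of_nonneg_left l2 (by positivity))
  change c * (∫ u in (-1:ℝ)..1, sigmaMob (π t u) * (g t u * D t u)) -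
    (∫ u in (-1:ℝ)..1, sigmaMob (π t u) * (g t u)^2) ≤ c^2/8 * ∫ u in (-1:ℝ)..1, (D t u)^2
  rw [← intervalIntegral.integral_const_mul, ← intervalIntegral.integral_const_mul,
    ← intervalIntegral.integral_sub (((s1 t).const_mul c).intervalIntegrable _ _)
      ((s2 t).intervalIntegrable _ _)]
  apply intervalIntegral.integral_mono_on (by norm_num)
    ((((s1 t).const_mul c).sub (s2 t)).intervalIntegrable _ _)
    ((((sec D cD t).pow 2).const_mul _).intervalIntegrable _ _)
  intro u hu
  obtain ⟨h0, h1⟩ := hπ_range t ht u hu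
  change c * (sigmaMob (π t u) * (g t u * D t u)) - sigmaMob (π t u) * (g t u)^2
    ≤ c^2/8 * (D t u)^2
  have a0 : 0 ≤ sigmaMob (π t u) := by
    unfold sigmaMob; nlinarith [mul_nonneg h0 (sub_nonneg.2 h1)]
  have a1 : sigmaMob (π t u) ≤ 1/2 := by
    unfold sigmaMob; nlinarith [sq_nonneg (2 * π t u - 1)]
  nlinarith [mul_nonneg a0 (sq_nonneg (g t u - c * D t u / 2)),
    mul_nonneg (sub_nonneg.2 a1) (sq_nonneg (c * D t u))]

/-- comparison of the rate functionals with and without interaction: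
`(1/2) Î⁰(π) - (β²/16) ∫∫ (∂_u π)² ≤ Î^β(π) ≤ 2 Î⁰(π) + (β²/8) ∫∫ (∂_u π)²`. -/
theorem rate_functional_comparison
    (j : ℝ → ℝ)
    (hj_smooth : ContDiff ℝ 1 j)
    (hj_nonneg : ∀ u, 0 ≤ j u)
    (hj_even : ∀ u, j (-u) = j u)
    (hj_supp : ∀ u : ℝ, 1 < |u| → j u = 0)
    (hj_int : (∫ u : ℝ, j u) = 1)
    (ρm ρp : ℝ) (hρm : ρm ∈ Ioo (0:ℝ) 1) (hρp : ρp ∈ Ioo (0:ℝ) 1)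
    (T : ℝ) (hT : 0 < T) (β : ℝ) (hβ : 0 ≤ β)
    (π : ℝ → ℝ → ℝ)
    (hπ_cont : Continuous (Function.uncurry π))
    (hπ_u : ∀ t : ℝ, ContDiff ℝ 1 (fun u => π t u))
    (hπ_du : Continuous (Function.uncurry fun t u => deriv (fun w => π t w) u))
    (hπ_range : ∀ t ∈ Icc (0:ℝ) T, ∀ u ∈ Icc (-1:ℝ) 1, π t u ∈ Icc (0:ℝ) 1) :
    (1/2 : ℝ≥0∞) * Ihat j 0 ρm ρp T π -
        ENNReal.ofReal
          (β^2/16 * ∫ t in (0:ℝ)..T, ∫ u in (-1:ℝ)..1, (deriv (fun w => π t w) u)^2) ≤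
      Ihat j β ρm ρp T π ∧
    Ihat j β ρm ρp T π ≤
      2 * Ihat j 0 ρm ρp T π +
        ENNReal.ofReal
          (β^2/8 * ∫ t in (0:ℝ)..T, ∫ u in (-1:ℝ)..1, (deriv (fun w => π t w) u)^2) := by
  have main := fun c (G : ℝ → ℝ → ℝ) (hG : RateTest G) =>
    aux_main j hj_smooth hj_nonneg hj_even hj_supp hj_int T hT c π hπ_cont hπ_u hπ_du hπ_range
    (fun t u => deriv (fun w => G t w) u) hG.2.2.2.2.1
  set E := ∫ t in (0:ℝ)..T, ∫ u in (-1:ℝ)..1, (deriv (fun w => π t w) u)^2 with hE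
  have hE0 : 0 ≤ E := intervalIntegral.integral_nonneg hT.le fun t _ =>
    intervalIntegral.integral_nonneg (by norm_num) fun u _ => sq_nonneg _
  constructor
  · rw [tsub_le_iff_right]
    unfold Ihat
    rw [ENNReal.mul_iSup]
    refine iSup_le fun G => ?_
    rw [ENNReal.mul_iSup]
    refine iSup_le fun hG => ?_
    refine le_trans ?_ (add_le_add_left (le_iSup₂_of_le (fun t u => (1/2) * G t u) (aux_half hG) le_rfl) _)
    refine le_trans ?_ ENNReal.ofReal_add_le
    have : (1/2 : ℝ≥0∞) = ENNReal.ofReal (1/2) := by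
      rw [ENNReal.ofReal_div_of_pos (by norm_num)]; simp
    rw [this, ← ENNReal.ofReal_mul (by norm_num)]
    apply ENNReal.ofReal_le_ofReal
    rw [aux_JG_mul, aux_JG]
    have := main (2 * β) G hG
    linarith
  · unfold Ihat
    refine iSup₂_le fun G hG => ?_
    refine le_trans ?_ (add_le_add_left (mul_le_mul_right (le_iSup₂_of_le (fun t u => (1/2) * G t u) (aux_half hG) le_rfl) _) _)
    have : (2 : ℝ≥0∞) = ENNReal.ofReal 2 := by simp
    rw [this, ← ENNReal.ofReal_mul (by norm_num)]
    refine le_trans ?_ ENNReal.ofReal_add_le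
    apply ENNReal.ofReal_le_ofReal
    rw [aux_JG_mul, aux_JG]
    have := main (-2 * β) G hG
    linarith


end
end

section
/- Let ρ^0 : [0,T] × [-1,1] → [0,1] be continuous, C^1 in t and C^2 in u on (0,T) × (-1,1) with ∂_u ρ^0 continuous on [0,T] × [-1,1], solving the heat equation ∂_t ρ^0 = ∂_u² ρ^0 with boundary values ρ^0(t,-1) = ρ_-, ρ^0(t,1) = ρ_+ for all t ∈ [0,T]. Then for every β ≥ 0, Î^β(ρ^0) ≤ (β²/16) ∫_0^T ∫_{-1}^{1} (∂_u ρ^0)² du dt. -/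
open MeasureTheory Set
open scoped ENNReal

noncomputable section

structure NiceSol (V Vt Vu : ℝ → ℝ → ℝ) : Prop where
  c0 : Continuous (Function.uncurry V)
  ct : Continuous (Function.uncurry Vt)
  cu : Continuous (Function.uncurry Vu)
  dt : ∀ t u, HasDerivAt (fun s => V s u) (Vt t u) t
  du : ∀ t u, HasDerivAt (fun w => V t w) (Vu t u) u
  duu : ∀ t u, HasDerivAt (fun w => Vu t w) (Vt t u) u

theorem iint_swap (F : ℝ → ℝ → ℝ) (hF : Continuous (Function.uncurry F)) (a b c d : ℝ) :
    ∫ x in a..b, ∫ y in c..d, F x y = ∫ y in c..d, ∫ x in a..b, F x y := by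
  apply intervalIntegral_intervalIntegral_swap
  have h1 : IntegrableOn (Function.uncurry F) (uIcc a b ×ˢ uIcc c d) :=
    hF.continuousOn.integrableOn_compact (isCompact_uIcc.prod isCompact_uIcc)
  exact h1.mono_set (prod_mono uIoc_subset_uIcc uIoc_subset_uIcc)

theorem cont_inner (F : ℝ → ℝ → ℝ) (hF : Continuous (Function.uncurry F)) (c d : ℝ) :
    Continuous (fun x => ∫ y in c..d, F x y) :=
  intervalIntegral.continuous_parametric_intervalIntegral_of_continuous' hF c d

theorem slice1 {F : ℝ → ℝ → ℝ} (hF : Continuous (Function.uncurry F)) (u : ℝ) :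
    Continuous (fun t => F t u) := hF.comp (by fun_prop : Continuous fun t : ℝ => (t, u))

theorem slice2 {F : ℝ → ℝ → ℝ} (hF : Continuous (Function.uncurry F)) (t : ℝ) :
    Continuous (fun u => F t u) := hF.comp (by fun_prop : Continuous fun u : ℝ => (t, u))

theorem cmul {F G : ℝ → ℝ → ℝ} (hF : Continuous (Function.uncurry F))
    (hG : Continuous (Function.uncurry G)) :
    Continuous (Function.uncurry fun t u => F t u * G t u) := hF.mul hG

theorem cadd {F G : ℝ → ℝ → ℝ} (hF : Continuous (Function.uncurry F))
    (hG : Continuous (Function.uncurry G)) :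
    Continuous (Function.uncurry fun t u => F t u + G t u) := hF.add hG

theorem csub {F G : ℝ → ℝ → ℝ} (hF : Continuous (Function.uncurry F))
    (hG : Continuous (Function.uncurry G)) :
    Continuous (Function.uncurry fun t u => F t u - G t u) := hF.sub hG

/-- The part of the functional without boundary terms. -/
def Afun (T : ℝ) (V G Gt Guu : ℝ → ℝ → ℝ) : ℝ :=
  (∫ u in (-1:ℝ)..1, V T u * G T u) - (∫ u in (-1:ℝ)..1, V 0 u * G 0 u)
  - (∫ t in (0:ℝ)..T, ∫ u in (-1:ℝ)..1, V t u * Gt t u)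
  - (∫ t in (0:ℝ)..T, ∫ u in (-1:ℝ)..1, V t u * Guu t u)

theorem weak_nice {V Vt Vu : ℝ → ℝ → ℝ} (hV : NiceSol V Vt Vu) {ρm ρp : ℝ}
    (hm : ∀ t, V t (-1) = ρm) (hp : ∀ t, V t 1 = ρp) (T : ℝ)
    {G Gt Gu Guu : ℝ → ℝ → ℝ} (c0 : Continuous (Function.uncurry G))
    (ct : Continuous (Function.uncurry Gt)) (cu : Continuous (Function.uncurry Gu))
    (cuu : Continuous (Function.uncurry Guu))
    (dt : ∀ t u, HasDerivAt (fun s => G s u) (Gt t u) t)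
    (du : ∀ t u, HasDerivAt (fun w => G t w) (Gu t u) u)
    (duu : ∀ t u, HasDerivAt (fun w => Gu t w) (Guu t u) u)
    (bm : ∀ t, G t (-1) = 0) (bp : ∀ t, G t 1 = 0) :
    Afun T V G Gt Guu + ρp * (∫ t in (0:ℝ)..T, Gu t 1) - ρm * (∫ t in (0:ℝ)..T, Gu t (-1)) = 0 := by
  have cVtG := cmul hV.ct c0
  have cVGt := cmul hV.c0 ct
  have cVGuu := cmul hV.c0 cuu
  have cVG := cmul hV.c0 c0
  have h1 : (∫ u in (-1:ℝ)..1, V T u * G T u) - (∫ u in (-1:ℝ)..1, V 0 u * G 0 u)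
      = ∫ u in (-1:ℝ)..1, ∫ t in (0:ℝ)..T, (Vt t u * G t u + V t u * Gt t u) := by
    rw [← intervalIntegral.integral_sub ((slice2 cVG T).intervalIntegrable _ _)
      ((slice2 cVG 0).intervalIntegrable _ _)]
    refine intervalIntegral.integral_congr fun u _ => ?_
    refine (intervalIntegral.integral_eq_sub_of_hasDerivAt
      (f := fun t => V t u * G t u) (fun t _ => ?_) ?_).symm
    · exact (hV.dt t u).mul (dt t u)
    · exact (slice1 (cadd cVtG cVGt) u).intervalIntegrable _ _
  have h2 : ∀ t, ∫ u in (-1:ℝ)..1, Vt t u * G t u =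
      (∫ u in (-1:ℝ)..1, V t u * Guu t u) - ρp * Gu t 1 + ρm * Gu t (-1) := by
    intro t
    have := intervalIntegral.integral_eq_sub_of_hasDerivAt (a := -1) (b := 1)
      (f := fun u => Vu t u * G t u - V t u * Gu t u)
      (f' := fun u => Vt t u * G t u - V t u * Guu t u) (fun u _ => by
        have := ((hV.duu t u).mul (du t u)).sub ((hV.du t u).mul (duu t u))
        exact this.congr_deriv (by ring)) ((slice2 (csub cVtG cVGuu) t).intervalIntegrable _ _)
    rw [intervalIntegral.integral_sub ((slice2 cVtG t).intervalIntegrable _ _)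
      ((slice2 cVGuu t).intervalIntegrable _ _)] at this
    simp only [bm, bp, hm, hp] at this
    linarith
  rw [← iint_swap _ (cadd cVtG cVGt)] at h1
  have h3 : (∫ t in (0:ℝ)..T, ∫ u in (-1:ℝ)..1, (Vt t u * G t u + V t u * Gt t u)) =
      ∫ t in (0:ℝ)..T, (((∫ u in (-1:ℝ)..1, V t u * Guu t u) - ρp * Gu t 1 + ρm * Gu t (-1))
        + ∫ u in (-1:ℝ)..1, V t u * Gt t u) := by
    refine intervalIntegral.integral_congr fun t _ => ?_
    rw [intervalIntegral.integral_add ((slice2 cVtG t).intervalIntegrable _ _)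
      ((slice2 cVGt t).intervalIntegrable _ _), h2]
  have i1 := (cont_inner _ cVGuu (-1) 1).intervalIntegrable (μ := volume) 0 T
  have i2 := (cont_inner _ cVGt (-1) 1).intervalIntegrable (μ := volume) 0 T
  have i3 := ((slice1 cu 1).const_mul ρp).intervalIntegrable (μ := volume) 0 T
  have i4 := ((slice1 cu (-1)).const_mul ρm).intervalIntegrable (μ := volume) 0 T
  rw [intervalIntegral.integral_add ((i1.sub i3).add i4) i2,
    intervalIntegral.integral_add (i1.sub i3) i4, intervalIntegral.integral_sub i1 i3,
    intervalIntegral.integral_const_mul, intervalIntegral.integral_const_mul] at h3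
  unfold Afun
  linarith

theorem Afun_sub (T : ℝ) {V W G Gt Guu : ℝ → ℝ → ℝ} (cV : Continuous (Function.uncurry V))
    (cW : Continuous (Function.uncurry W)) (c0 : Continuous (Function.uncurry G))
    (ct : Continuous (Function.uncurry Gt)) (cuu : Continuous (Function.uncurry Guu)) :
    Afun T (fun t u => V t u - W t u) G Gt Guu = Afun T V G Gt Guu - Afun T W G Gt Guu := by
  have key : ∀ H : ℝ → ℝ → ℝ, Continuous (Function.uncurry H) → ∀ t,
      ∫ u in (-1:ℝ)..1, (V t u - W t u) * H t u =
      (∫ u in (-1:ℝ)..1, V t u * H t u) - ∫ u in (-1:ℝ)..1, W t u * H t u := by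
    intro H hH t
    rw [← intervalIntegral.integral_sub ((slice2 (cmul cV hH) t).intervalIntegrable _ _)
      ((slice2 (cmul cW hH) t).intervalIntegrable _ _)]
    simp only [sub_mul]
  have key2 : ∀ H : ℝ → ℝ → ℝ, Continuous (Function.uncurry H) →
      ∫ t in (0:ℝ)..T, ∫ u in (-1:ℝ)..1, (V t u - W t u) * H t u =
      (∫ t in (0:ℝ)..T, ∫ u in (-1:ℝ)..1, V t u * H t u) -
        ∫ t in (0:ℝ)..T, ∫ u in (-1:ℝ)..1, W t u * H t u := by
    intro H hH
    simp only [key H hH]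
    exact intervalIntegral.integral_sub
      ((cont_inner _ (cmul cV hH) (-1) 1).intervalIntegrable (μ := volume) 0 T)
      ((cont_inner _ (cmul cW hH) (-1) 1).intervalIntegrable (μ := volume) 0 T)
  unfold Afun
  rw [key G c0, key G c0, key2 Gt ct, key2 Guu cuu]
  ring

theorem bdd_on (T : ℝ) {H : ℝ → ℝ → ℝ} (hH : Continuous (Function.uncurry H)) :
    ∃ M, 0 ≤ M ∧ ∀ t ∈ Icc (0:ℝ) T, ∀ u ∈ Icc (-1:ℝ) 1, |H t u| ≤ M := by
  obtain ⟨M, hM⟩ := ((isCompact_Icc (a := (0:ℝ)) (b := T)).prod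
    (isCompact_Icc (a := (-1:ℝ)) (b := 1))).exists_bound_of_continuousOn hH.continuousOn
  refine ⟨max M 0, le_max_right _ _, fun t ht u hu => ?_⟩
  exact (hM (t, u) ⟨ht, hu⟩).trans (le_max_left _ _)

theorem Afun_bound {T : ℝ} (hT : 0 < T) {G Gt Guu : ℝ → ℝ → ℝ}
    (c0 : Continuous (Function.uncurry G))
    (ct : Continuous (Function.uncurry Gt)) (cuu : Continuous (Function.uncurry Guu)) :
    ∃ C, 0 ≤ C ∧ ∀ (W : ℝ → ℝ → ℝ) (ε : ℝ), 0 ≤ ε →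
      (∀ t ∈ Icc (0:ℝ) T, ∀ u ∈ Icc (-1:ℝ) 1, |W t u| ≤ ε) → |Afun T W G Gt Guu| ≤ C * ε := by
  obtain ⟨M0, p0, h0⟩ := bdd_on T c0
  obtain ⟨M1, p1, h1⟩ := bdd_on T ct
  obtain ⟨M2, p2, h2⟩ := bdd_on T cuu
  refine ⟨2 * M0 + 2 * M0 + 2 * M1 * T + 2 * M2 * T, by positivity, fun W ε hε hW => ?_⟩
  have key : ∀ (H : ℝ → ℝ → ℝ) (M : ℝ), 0 ≤ M →
      (∀ t ∈ Icc (0:ℝ) T, ∀ u ∈ Icc (-1:ℝ) 1, |H t u| ≤ M) → ∀ t ∈ Icc (0:ℝ) T,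
      |∫ u in (-1:ℝ)..1, W t u * H t u| ≤ 2 * M * ε := by
    intro H M hM hH t ht
    have := intervalIntegral.norm_integral_le_of_norm_le_const (a := (-1:ℝ)) (b := 1)
      (f := fun u => W t u * H t u) (C := ε * M) (fun u hu => by
        rw [uIoc_of_le (by norm_num)] at hu
        rw [norm_mul]
        exact mul_le_mul (hW t ht u ⟨hu.1.le, hu.2⟩) (hH t ht u ⟨hu.1.le, hu.2⟩)
          (norm_nonneg _) hε)
    rw [Real.norm_eq_abs] at this
    norm_num at this
    linarith
  have key2 : ∀ (H : ℝ → ℝ → ℝ) (M : ℝ), 0 ≤ M →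
      (∀ t ∈ Icc (0:ℝ) T, ∀ u ∈ Icc (-1:ℝ) 1, |H t u| ≤ M) →
      |∫ t in (0:ℝ)..T, ∫ u in (-1:ℝ)..1, W t u * H t u| ≤ 2 * M * ε * T := by
    intro H M hM hH
    have := intervalIntegral.norm_integral_le_of_norm_le_const (a := (0:ℝ)) (b := T)
      (f := fun t => ∫ u in (-1:ℝ)..1, W t u * H t u) (C := 2 * M * ε) (fun t ht => by
        rw [uIoc_of_le hT.le] at ht
        exact key H M hM hH t ⟨ht.1.le, ht.2⟩)
    rw [sub_zero, abs_of_pos hT] at this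
    exact this
  have a1 := abs_le.1 (key G M0 p0 h0 T ⟨hT.le, le_rfl⟩)
  have a2 := abs_le.1 (key G M0 p0 h0 0 ⟨le_rfl, hT.le⟩)
  have a3 := abs_le.1 (key2 Gt M1 p1 h1)
  have a4 := abs_le.1 (key2 Guu M2 p2 h2)
  unfold Afun
  rw [abs_le]
  constructor <;> nlinarith [a1.1, a1.2, a2.1, a2.2, a3.1, a3.2, a4.1, a4.2]

/-- Weak maximum principle under pointwise regularity. -/
theorem max_principle {T : ℝ} (hT : 0 < T) (w : ℝ → ℝ → ℝ)
    (hc : Continuous (Function.uncurry w))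
    (hdt : ∀ t u, DifferentiableAt ℝ (fun s => w s u) t)
    (hheat : ∀ t ∈ Ioo (0:ℝ) T, ∀ u ∈ Ioo (-1:ℝ) 1,
      deriv (fun s => w s u) t = deriv (deriv (fun v => w t v)) u)
    (M : ℝ) (h0 : ∀ u ∈ Icc (-1:ℝ) 1, w 0 u ≤ M)
    (hb : ∀ t ∈ Icc (0:ℝ) T, w t (-1) ≤ M ∧ w t 1 ≤ M) :
    ∀ t ∈ Icc (0:ℝ) T, ∀ u ∈ Icc (-1:ℝ) 1, w t u ≤ M := by
  have main : ∀ T' ∈ Ioo (0:ℝ) T, ∀ δ > 0, ∀ t ∈ Icc (0:ℝ) T', ∀ u ∈ Icc (-1:ℝ) 1,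
      w t u ≤ M + δ * t := by
    intro T' hT' δ hδ
    obtain ⟨⟨t0, u0⟩, ⟨ht0, hu0⟩, hmax⟩ := ((isCompact_Icc (a := (0:ℝ)) (b := T')).prod
      (isCompact_Icc (a := (-1:ℝ)) (b := 1))).exists_isMaxOn
      ⟨(0, 0), ⟨⟨le_rfl, hT'.1.le⟩, by norm_num⟩⟩
      (f := fun p : ℝ × ℝ => w p.1 p.2 - δ * p.1)
      (by
        have : Continuous fun p : ℝ × ℝ => w p.1 p.2 - δ * p.1 :=
          hc.sub (by fun_prop)
        exact this.continuousOn)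
    have hmax' : ∀ t ∈ Icc (0:ℝ) T', ∀ u ∈ Icc (-1:ℝ) 1,
        w t u - δ * t ≤ w t0 u0 - δ * t0 := fun t ht u hu => hmax (a := (t, u)) ⟨ht, hu⟩
    suffices hs : w t0 u0 - δ * t0 ≤ M by
      intro t ht u hu
      linarith [hmax' t ht u hu]
    simp only at ht0 hu0
    have hδt : 0 ≤ δ * t0 := mul_nonneg hδ.le ht0.1
    have ht0T : t0 ∈ Icc (0:ℝ) T := ⟨ht0.1, ht0.2.trans hT'.2.le⟩
    rcases eq_or_lt_of_le ht0.1 with e | ht0p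
    · have := h0 u0 hu0
      rw [← e]; linarith
    rcases eq_or_lt_of_le hu0.1 with e | hu1
    · have := (hb t0 ht0T).1
      rw [← e]; linarith
    rcases eq_or_lt_of_le hu0.2 with e | hu2
    · have := (hb t0 ht0T).2
      rw [e]; linarith
    exfalso
    have hheat0 := hheat t0 ⟨ht0p, ht0.2.trans_lt hT'.2⟩ u0 ⟨hu1, hu2⟩
    -- time derivative
    have hd : δ ≤ deriv (fun s => w s u0) t0 := by
      have h1 := ((hdt t0 u0).hasDerivAt.hasDerivWithinAt (s := Iio t0))
      rw [hasDerivWithinAt_iff_tendsto_slope' (by simp)] at h1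
      refine ge_of_tendsto h1 ?_
      have : ∀ᶠ s in nhdsWithin t0 (Iio t0), s ∈ Ioo 0 t0 := Ioo_mem_nhdsLT ht0p
      filter_upwards [this] with s hs
      have := hmax' s ⟨hs.1.le, hs.2.le.trans ht0.2⟩ u0 hu0
      rw [slope_def_field, le_div_iff_of_neg (by linarith [hs.2])]
      linarith
    have hpos : deriv (deriv (fun v => w t0 v)) u0 > 0 := by rw [← hheat0]; linarith
    have hlm : IsLocalMax (fun v => w t0 v) u0 := by
      have : ∀ᶠ v in nhds u0, v ∈ Ioo (-1:ℝ) 1 := Ioo_mem_nhds hu1 hu2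
      filter_upwards [this] with v hv
      linarith [hmax' t0 ht0 v ⟨hv.1.le, hv.2.le⟩]
    have hlmin := isLocalMin_of_deriv_deriv_pos hpos hlm.deriv_eq_zero (slice2 hc t0).continuousAt
    have heq : (fun v => w t0 v) =ᶠ[nhds u0] fun _ => w t0 u0 := by
      filter_upwards [hlm, hlmin] with v h1 h2
      exact le_antisymm h1 h2
    have := heq.deriv.deriv_eq
    simp at this
    linarith
  have main2 : ∀ t ∈ Ico (0:ℝ) T, ∀ u ∈ Icc (-1:ℝ) 1, w t u ≤ M := by
    intro t ht u hu
    refine le_of_forall_pos_le_add fun ε hε => ?_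
    have := main ((t + T) / 2) ⟨by linarith [ht.1, ht.2], by linarith [ht.2]⟩ (ε / T) (by positivity) t
      ⟨ht.1, by linarith [ht.2]⟩ u hu
    have h2 : ε / T * t ≤ ε := by
      rw [div_mul_eq_mul_div, div_le_iff₀ hT]
      exact mul_le_mul_of_nonneg_left ht.2.le hε.le
    linarith
  intro t ht u hu
  have hcl : Icc (0:ℝ) T ⊆ {t | w t u ≤ M} := by
    rw [← closure_Ico hT.ne]
    exact closure_minimal (fun t ht => main2 t ht u hu) (isClosed_le (slice1 hc u) continuous_const)
  exact hcl ht

theorem nice_add {V Vt Vu W Wt Wu : ℝ → ℝ → ℝ} (h : NiceSol V Vt Vu) (k : NiceSol W Wt Wu) :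
    NiceSol (fun t u => V t u + W t u) (fun t u => Vt t u + Wt t u)
      (fun t u => Vu t u + Wu t u) where
  c0 := cadd h.c0 k.c0
  ct := cadd h.ct k.ct
  cu := cadd h.cu k.cu
  dt t u := (h.dt t u).add (k.dt t u)
  du t u := (h.du t u).add (k.du t u)
  duu t u := (h.duu t u).add (k.duu t u)

theorem nice_lin (a b : ℝ) :
    NiceSol (fun _ u => a + b * u) (fun _ _ => 0) (fun _ _ => b) where
  c0 := by unfold Function.uncurry; fun_prop
  ct := by unfold Function.uncurry; fun_prop
  cu := by unfold Function.uncurry; fun_prop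
  dt t u := hasDerivAt_const _ _
  du t u := by simpa using ((hasDerivAt_id u).const_mul b).const_add a
  duu t u := hasDerivAt_const _ _

theorem nice_mode (c l : ℝ) :
    NiceSol (fun t u => c * Real.exp (-l ^ 2 * t) * Real.sin (l * (u + 1)))
      (fun t u => -l ^ 2 * (c * Real.exp (-l ^ 2 * t) * Real.sin (l * (u + 1))))
      (fun t u => l * (c * Real.exp (-l ^ 2 * t) * Real.cos (l * (u + 1)))) where
  c0 := by unfold Function.uncurry; fun_prop
  ct := by unfold Function.uncurry; fun_prop
  cu := by unfold Function.uncurry; fun_prop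
  dt t u := by
    have h1 : HasDerivAt (fun s : ℝ => -l ^ 2 * s) (-l ^ 2) t := by
      simpa using (hasDerivAt_id t).const_mul (-l ^ 2)
    exact ((h1.exp.const_mul c).mul_const (Real.sin (l * (u + 1)))).congr_deriv (by ring)
  du t u := by
    have h1 : HasDerivAt (fun s : ℝ => l * (s + 1)) l u := by
      simpa using ((hasDerivAt_id u).add_const 1).const_mul l
    exact (h1.sin.const_mul (c * Real.exp (-l ^ 2 * t))).congr_deriv (by ring)
  duu t u := by
    have h1 : HasDerivAt (fun s : ℝ => l * (s + 1)) l u := by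
      simpa using ((hasDerivAt_id u).add_const 1).const_mul l
    exact ((h1.cos.const_mul (c * Real.exp (-l ^ 2 * t))).const_mul l).congr_deriv (by ring)

instance fact4 : Fact (0 < (4:ℝ)) := ⟨by norm_num⟩

theorem nice_of_trig (P : C(AddCircle (4:ℝ), ℂ))
    (hP : P ∈ Submodule.span ℂ (range (@fourier (4:ℝ)))) :
    ∀ c : ℂ, ∃ V Vt Vu, NiceSol V Vt Vu ∧ (∀ t, V t (-1) = 0) ∧ (∀ t, V t 1 = 0) ∧
      ∀ x : ℝ, V 0 (x - 1) =
        (c * (P (x : AddCircle (4:ℝ)) - P ((-x : ℝ) : AddCircle (4:ℝ))) / 2).re := by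
  induction hP using Submodule.span_induction with
  | mem P hP =>
    obtain ⟨n, rfl⟩ := hP
    intro c
    refine ⟨_, _, _, nice_mode (-c.im) (n * (Real.pi / 2)), ?_, ?_, ?_⟩
    · intro t; simp
    · intro t
      have : (n * (Real.pi / 2)) * ((1:ℝ) + 1) = n * Real.pi := by ring
      rw [this, Real.sin_int_mul_pi, mul_zero]
    · intro x
      rw [fourier_coe_apply, fourier_coe_apply]
      have e1 : (2 * (Real.pi:ℂ) * Complex.I * n * (x:ℝ) / ((4:ℝ):ℂ)) =
          ((n * (Real.pi / 2) * x : ℝ) : ℂ) * Complex.I := by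
        push_cast; ring
      have e2 : (2 * (Real.pi:ℂ) * Complex.I * n * ((-x:ℝ):ℂ) / ((4:ℝ):ℂ)) =
          ((-(n * (Real.pi / 2) * x) : ℝ) : ℂ) * Complex.I := by
        push_cast; ring
      rw [e1, e2, Complex.exp_mul_I, Complex.exp_mul_I, ← Complex.ofReal_cos, ← Complex.ofReal_sin,
        ← Complex.ofReal_cos, ← Complex.ofReal_sin, Real.cos_neg, Real.sin_neg]
      have e3 : c * ((Real.cos (n * (Real.pi / 2) * x) : ℂ) + (Real.sin (n * (Real.pi / 2) * x) : ℂ) * Complex.I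
         - ((Real.cos (n * (Real.pi / 2) * x) : ℂ) + ((-Real.sin (n * (Real.pi / 2) * x) : ℝ) : ℂ) * Complex.I)) / 2
         = c * ((Real.sin (n * (Real.pi / 2) * x) : ℝ) : ℂ) * Complex.I := by
        push_cast; ring
      rw [e3]
      simp only [mul_zero, Real.exp_zero, mul_one, sub_add_cancel]
      rw [Complex.mul_I_re, Complex.im_mul_ofReal]
      ring
  | zero =>
    intro c
    refine ⟨_, _, _, nice_lin 0 0, by simp, by simp, by simp⟩
  | add P Q _ _ hP hQ =>
    intro c
    obtain ⟨V, Vt, Vu, h1, h2, h3, h4⟩ := hP c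
    obtain ⟨W, Wt, Wu, k1, k2, k3, k4⟩ := hQ c
    refine ⟨_, _, _, nice_add h1 k1, by simp [h2, k2], by simp [h3, k3], fun x => ?_⟩
    simp only [h4, k4]
    rw [← Complex.add_re]
    congr 1
    simp only [ContinuousMap.add_apply]
    ring
  | smul a P _ hP =>
    intro c
    obtain ⟨V, Vt, Vu, h1, h2, h3, h4⟩ := hP (c * a)
    refine ⟨V, Vt, Vu, h1, h2, h3, fun x => ?_⟩
    rw [h4]
    congr 1
    simp only [ContinuousMap.smul_apply, smul_eq_mul]
    ring

theorem approx_nice (θ : ℝ → ℝ) (hθ : Continuous θ) (hm : θ (-1) = 0) (hp : θ 1 = 0)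
    (ε : ℝ) (hε : 0 < ε) :
    ∃ V Vt Vu, NiceSol V Vt Vu ∧ (∀ t, V t (-1) = 0) ∧ (∀ t, V t 1 = 0) ∧
      ∀ u ∈ Icc (-1:ℝ) 1, |θ u - V 0 u| ≤ ε := by
  let f : ℝ → ℂ := fun x => ((if x ≤ 2 then θ (x - 1) else -θ (3 - x) : ℝ) : ℂ)
  have hf : Continuous f := by
    refine Complex.continuous_ofReal.comp ?_
    refine Continuous.if_le (by fun_prop) (by fun_prop) continuous_id continuous_const ?_
    intro x hx
    subst hx
    norm_num [hp]
  have hf0 : f 0 = f (0 + 4) := by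
    simp only [f]
    norm_num [hm]
  let F : C(AddCircle (4:ℝ), ℂ) := ⟨AddCircle.liftIco 4 0 f, AddCircle.liftIco_continuous hf0 hf.continuousOn⟩
  have hF : ∀ x ∈ Ico (0:ℝ) 4, F (x : AddCircle (4:ℝ)) = f x := fun x hx =>
    AddCircle.liftIco_coe_apply (p := (4:ℝ)) (a := 0) (f := f) (by simpa using hx)
  have hF4 : ∀ x ∈ Icc (0:ℝ) 4, F (x : AddCircle (4:ℝ)) = f x := by
    intro x hx
    rcases eq_or_lt_of_le hx.2 with e | e
    · subst e
      have : ((4:ℝ) : AddCircle (4:ℝ)) = ((0:ℝ) : AddCircle (4:ℝ)) := by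
        rw [AddCircle.coe_period]; rfl
      rw [this, hF 0 (by norm_num), hf0]; norm_num
    · exact hF x ⟨hx.1, e⟩
  have hmem : F ∈ (Submodule.span ℂ (range (@fourier (4:ℝ)))).topologicalClosure := by
    rw [span_fourier_closure_eq_top]; trivial
  obtain ⟨P, hP, hd⟩ := Metric.mem_closure_iff.1 hmem ε hε
  obtain ⟨V, Vt, Vu, h1, h2, h3, h4⟩ := nice_of_trig P hP 1
  refine ⟨V, Vt, Vu, h1, h2, h3, fun u hu => ?_⟩
  have h5 := h4 (u + 1)
  rw [add_sub_cancel_right] at h5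
  have hb : ∀ y, ‖F y - P y‖ ≤ ε := fun y => by
    rw [← dist_eq_norm]
    exact (ContinuousMap.dist_apply_le_dist y).trans hd.le
  have e1 : F ((u + 1 : ℝ) : AddCircle (4:ℝ)) = (θ u : ℂ) := by
    rw [hF4 _ ⟨by linarith [hu.1], by linarith [hu.2]⟩]
    simp only [f]
    rw [if_pos (by linarith [hu.2])]
    simp
  have e2 : F ((-(u + 1) : ℝ) : AddCircle (4:ℝ)) = -(θ u : ℂ) := by
    have : ((-(u + 1) : ℝ) : AddCircle (4:ℝ)) = ((-(u + 1) + 4 : ℝ) : AddCircle (4:ℝ)) := by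
      rw [AddCircle.coe_add_period]
    rw [this, hF4 _ ⟨by linarith [hu.2], by linarith [hu.1]⟩]
    simp only [f]
    split_ifs with h
    · have : u = 1 := le_antisymm hu.2 (by linarith)
      subst this
      norm_num [hm, hp]
    · have : 3 - (-(u + 1) + 4) = u := by ring
      rw [this]; push_cast; rfl
  have b1 := hb ((u + 1 : ℝ) : AddCircle (4:ℝ))
  have b2 := hb ((-(u + 1) : ℝ) : AddCircle (4:ℝ))
  rw [e1] at b1
  rw [e2] at b2
  have c1 := abs_le.1 ((Complex.abs_re_le_norm _).trans b1)
  have c2 := abs_le.1 ((Complex.abs_re_le_norm _).trans b2)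
  rw [h5, one_mul]
  have : ((P ((u + 1 : ℝ) : AddCircle (4:ℝ)) - P ((-(u + 1) : ℝ) : AddCircle (4:ℝ))) / 2).re =
      ((P ((u + 1 : ℝ) : AddCircle (4:ℝ))).re - (P ((-(u + 1) : ℝ) : AddCircle (4:ℝ))).re) / 2 := by
    rw [← Complex.sub_re]
    exact Complex.div_ofNat_re _ 2
  rw [this]
  simp only [Complex.sub_re, Complex.neg_re, Complex.ofReal_re] at c1 c2
  rw [abs_le]
  constructor <;> linarith [c1.1, c1.2, c2.1, c2.2]

theorem deriv_sub_heat {ρ₀ V Vt Vu : ℝ → ℝ → ℝ} (hV : NiceSol V Vt Vu)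
    (h_t : ∀ u : ℝ, ContDiff ℝ 1 (fun t => ρ₀ t u))
    (h_u : ∀ t : ℝ, ContDiff ℝ 2 (fun u => ρ₀ t u)) (t u : ℝ)
    (h : deriv (fun s => ρ₀ s u) t = deriv (deriv (fun w => ρ₀ t w)) u) :
    deriv (fun s => ρ₀ s u - V s u) t = deriv (deriv (fun w => ρ₀ t w - V t w)) u := by
  have d1 : ∀ w, DifferentiableAt ℝ (fun w => ρ₀ t w) w := fun w =>
    (h_u t).differentiable (by norm_num) w
  have d2 : DifferentiableAt ℝ (deriv (fun w => ρ₀ t w)) u := by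
    have h2 : ContDiff ℝ (1 + 1) (fun u => ρ₀ t u) := h_u t
    exact ((contDiff_succ_iff_deriv.1 h2).2.2).differentiable (by norm_num) u
  have d3 : DifferentiableAt ℝ (fun s => ρ₀ s u) t := (h_t u).differentiable (by norm_num) t
  have e : deriv (fun w => ρ₀ t w - V t w) = fun w => deriv (fun w => ρ₀ t w) w - Vu t w := by
    funext w
    exact ((d1 w).hasDerivAt.sub (hV.du t w)).deriv
  have hh : HasDerivAt (fun s => ρ₀ s u - V s u) (deriv (fun s => ρ₀ s u) t - Vt t u) t :=
    d3.hasDerivAt.sub (hV.dt t u)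
  rw [e, hh.deriv, h]
  exact (d2.hasDerivAt.sub (hV.duu t u) :
    HasDerivAt (fun w => deriv (fun w => ρ₀ t w) w - Vu t w) _ u).deriv.symm

theorem weak_heat {ρm ρp T : ℝ} (hT : 0 < T) {ρ₀ : ℝ → ℝ → ℝ}
    (h_cont : Continuous (Function.uncurry ρ₀))
    (h_t : ∀ u : ℝ, ContDiff ℝ 1 (fun t => ρ₀ t u))
    (h_u : ∀ t : ℝ, ContDiff ℝ 2 (fun u => ρ₀ t u))
    (h_heat : ∀ t ∈ Ioo (0:ℝ) T, ∀ u ∈ Ioo (-1:ℝ) 1,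
      deriv (fun s => ρ₀ s u) t = deriv (deriv (fun w => ρ₀ t w)) u)
    (h_bdry : ∀ t ∈ Icc (0:ℝ) T, ρ₀ t (-1) = ρm ∧ ρ₀ t 1 = ρp)
    {G Gt Gu Guu : ℝ → ℝ → ℝ} (c0 : Continuous (Function.uncurry G))
    (ct : Continuous (Function.uncurry Gt)) (cu : Continuous (Function.uncurry Gu))
    (cuu : Continuous (Function.uncurry Guu))
    (dt : ∀ t u, HasDerivAt (fun s => G s u) (Gt t u) t)
    (du : ∀ t u, HasDerivAt (fun w => G t w) (Gu t u) u)
    (duu : ∀ t u, HasDerivAt (fun w => Gu t w) (Guu t u) u)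
    (bm : ∀ t, G t (-1) = 0) (bp : ∀ t, G t 1 = 0) :
    Afun T ρ₀ G Gt Guu + ρp * (∫ t in (0:ℝ)..T, Gu t 1) - ρm * (∫ t in (0:ℝ)..T, Gu t (-1)) = 0 := by
  obtain ⟨C, hC, hbound⟩ := Afun_bound hT c0 ct cuu
  set a := (ρp + ρm) / 2 with ha
  set b := (ρp - ρm) / 2 with hb
  have h00 := h_bdry 0 ⟨le_rfl, hT.le⟩
  have key : ∀ ε > 0, |Afun T ρ₀ G Gt Guu + ρp * (∫ t in (0:ℝ)..T, Gu t 1)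
      - ρm * (∫ t in (0:ℝ)..T, Gu t (-1))| ≤ C * ε := by
    intro ε hε
    obtain ⟨V, Vt, Vu, h1, h2, h3, h4⟩ := approx_nice (fun u => ρ₀ 0 u - (a + b * u))
      ((slice2 h_cont 0).sub (by fun_prop)) (by rw [h00.1, ha, hb]; ring)
      (by rw [h00.2, ha, hb]; ring) ε hε
    have hN := nice_add (nice_lin a b) h1
    have hNm : ∀ t, (a + b * (-1)) + V t (-1) = ρm := fun t => by rw [h2, ha, hb]; ring
    have hNp : ∀ t, (a + b * 1) + V t 1 = ρp := fun t => by rw [h3, ha, hb]; ring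
    have hw := weak_nice hN hNm hNp T c0 ct cu cuu dt du duu bm bp
    generalize hWd : (fun t u => a + b * u + V t u) = W at hN hw
    have hW : ∀ t u, W t u = a + b * u + V t u := fun t u => by rw [← hWd]
    have dt0 : ∀ t u, DifferentiableAt ℝ (fun s => ρ₀ s u) t := fun t u =>
      (h_t u).differentiable (by norm_num) t
    have up := max_principle hT (fun t u => ρ₀ t u - W t u) (csub h_cont hN.c0)
      (fun t u => (dt0 t u).sub (hN.dt t u).differentiableAt)
      (fun t ht u hu => deriv_sub_heat hN h_t h_u t u (h_heat t ht u hu)) ε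
      (fun u hu => by
        have := (abs_le.1 (h4 u hu)).2
        simp only [hW]; linarith)
      (fun t ht => by
        simp only [hW, hNm, hNp, (h_bdry t ht).1, (h_bdry t ht).2]
        constructor <;> linarith)
    have down := max_principle hT (fun t u => -(ρ₀ t u - W t u)) (csub h_cont hN.c0).neg
      (fun t u => ((dt0 t u).sub (hN.dt t u).differentiableAt).neg)
      (fun t ht u hu => by
        have := deriv_sub_heat hN h_t h_u t u (h_heat t ht u hu)
        have e1 : deriv (fun w => -(ρ₀ t w - W t w)) = fun w => -deriv (fun w => ρ₀ t w - W t w) w := by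
          funext w
          exact deriv.fun_neg
        rw [e1, deriv.fun_neg, deriv.fun_neg, this]) ε
      (fun u hu => by
        have := (abs_le.1 (h4 u hu)).1
        simp only [hW]; linarith)
      (fun t ht => by
        simp only [hW, hNm, hNp, (h_bdry t ht).1, (h_bdry t ht).2]
        constructor <;> linarith)
    have hA := hbound (fun t u => ρ₀ t u - W t u) ε hε.le (fun t ht u hu => by
      rw [abs_le]
      have := up t ht u hu
      have := down t ht u hu
      constructor <;> linarith)
    rw [Afun_sub T h_cont hN.c0 c0 ct cuu] at hA
    convert hA using 2
    linarith
  rw [← abs_eq_zero]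
  refine le_antisymm (le_of_forall_pos_le_add fun ε hε => ?_) (abs_nonneg _)
  have := key (ε / (C + 1)) (by positivity)
  have h2 : C * (ε / (C + 1)) ≤ ε := by
    rw [mul_div_assoc', div_le_iff₀ (by positivity)]
    nlinarith
  linarith

/-- The integrated kernel. -/
def Kker (j : ℝ → ℝ) (u v : ℝ) : ℝ := j (v - u) - j (2 - v - u) - j (-2 - v - u)

theorem deriv_convJ {j : ℝ → ℝ} (hj : ContDiff ℝ 1 j) (hj_even : ∀ u, j (-u) = j u)
    (hj_supp : ∀ u : ℝ, 1 < |u| → j u = 0) {m : ℝ → ℝ} (hm : ContDiff ℝ 1 m)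
    {u : ℝ} (hu : u ∈ Icc (-1:ℝ) 1) :
    deriv (convJ j m) u = ∫ v in (-1:ℝ)..1, Kker j u v * deriv m v := by
  have cj := hj.continuous
  have cj' : Continuous (deriv j) := hj.continuous_deriv le_rfl
  have cm := hm.continuous
  have cm' : Continuous (deriv m) := hm.continuous_deriv le_rfl
  have dj : ∀ x, HasDerivAt j (deriv j x) x := fun x =>
    (hj.differentiable (by norm_num) x).hasDerivAt
  have dm : ∀ x, HasDerivAt m (deriv m x) x := fun x =>
    (hm.differentiable (by norm_num) x).hasDerivAt
  let F' : ℝ → ℝ → ℝ := fun u v =>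
    (-deriv j (v - u) - deriv j (2 - v - u) - deriv j (-2 - v - u)) * m v
  have cF' : Continuous (Function.uncurry F') := by
    simp only [F', Function.uncurry_def]; fun_prop
  obtain ⟨M, hM⟩ := ((isCompact_closedBall u 1).prod
    (isCompact_Icc (a := (-1:ℝ)) (b := 1))).exists_bound_of_continuousOn cF'.continuousOn
  have hd : HasDerivAt (convJ j m) (∫ v in (-1:ℝ)..1, F' u v) u := by
    have := intervalIntegral.hasDerivAt_integral_of_dominated_loc_of_deriv_le (𝕜 := ℝ)
      (μ := volume) (a := -1) (b := 1) (F := fun u v => Jneum j u v * m v) (F' := F') (x₀ := u)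
      (s := Metric.closedBall u 1) (bound := fun _ => M)
      (Metric.closedBall_mem_nhds u one_pos)
      (Filter.Eventually.of_forall fun x => by
        have : Continuous fun v => Jneum j x v * m v := by unfold Jneum; fun_prop
        exact this.aestronglyMeasurable)
      (by
        have : Continuous fun v => Jneum j u v * m v := by unfold Jneum; fun_prop
        exact this.intervalIntegrable _ _)
      ((slice2 cF' u).aestronglyMeasurable)
      (Filter.Eventually.of_forall fun v hv x hx => by
        rw [uIoc_of_le (by norm_num)] at hv
        exact hM (x, v) ⟨hx, ⟨hv.1.le, hv.2⟩⟩)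
      (by simp)
      (Filter.Eventually.of_forall fun v _ x _ => by
        have aux : ∀ c, HasDerivAt (fun x => j (c - x)) (-deriv j (c - x)) x := fun c => by
          have h1 : HasDerivAt (fun x : ℝ => c - x) (-1) x := by
            simpa using (hasDerivAt_id x).const_sub c
          have := (dj (c - x)).comp x h1
          exact this.congr_deriv (by ring)
        have := (((aux v).add (aux (2 - v))).add (aux (-2 - v))).mul_const (m v)
        exact this.congr_deriv (by simp only [F']; ring))
    exact this.2
  rw [hd.deriv]
  have cK : Continuous fun v => Kker j u v * deriv m v := by unfold Kker; fun_prop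
  have ibp := intervalIntegral.integral_eq_sub_of_hasDerivAt (a := -1) (b := 1)
    (f := fun v => -(Kker j u v * m v))
    (f' := fun v => F' u v - Kker j u v * deriv m v) (fun v _ => by
      have aux : ∀ c, HasDerivAt (fun v => j (c - v - u)) (-deriv j (c - v - u)) v := fun c => by
        have h1 : HasDerivAt (fun x : ℝ => c - x - u) (-1) v := by
          simpa using ((hasDerivAt_id v).const_sub c).sub_const u
        have := (dj (c - v - u)).comp v h1
        exact this.congr_deriv (by ring)
      have a0 : HasDerivAt (fun v => j (v - u)) (deriv j (v - u)) v := by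
        have h1 : HasDerivAt (fun x : ℝ => x - u) 1 v := by
          simpa using (hasDerivAt_id v).sub_const u
        have := (dj (v - u)).comp v h1
        exact this.congr_deriv (by ring)
      have := (((a0.sub (aux 2)).sub (aux (-2))).mul (dm v)).neg
      exact this.congr_deriv (by
        simp only [F', Kker, Pi.sub_apply]; ring))
    (((slice2 cF' u).sub cK).intervalIntegrable _ _)
  rw [intervalIntegral.integral_sub ((slice2 cF' u).intervalIntegrable _ _)
    (cK.intervalIntegrable _ _)] at ibp
  have b1 : Kker j u 1 = 0 := by
    unfold Kker
    have e1 : j (-2 - 1 - u) = 0 := hj_supp _ (by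
      rw [lt_abs]; right; linarith [hu.1])
    have e2 : (2:ℝ) - 1 - u = 1 - u := by ring
    rw [e1, e2]; ring
  have b2 : Kker j u (-1) = 0 := by
    unfold Kker
    have e1 : j (2 - -1 - u) = 0 := hj_supp _ (by
      rw [lt_abs]; left; linarith [hu.2])
    have e2 : (-2:ℝ) - -1 - u = -1 - u := by ring
    rw [e1, e2]; ring
  rw [b1, b2] at ibp
  linarith

theorem Jneum_symm {j : ℝ → ℝ} (hj_even : ∀ u, j (-u) = j u) (u v : ℝ) :
    Jneum j u v = Jneum j v u := by
  unfold Jneum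
  rw [← hj_even (v - u), show -(v - u) = u - v by ring, show 2 - v - u = 2 - u - v by ring,
    show -2 - v - u = -2 - u - v by ring]

theorem Jneum_int {j : ℝ → ℝ} (cj : Continuous j) (hj_nonneg : ∀ u, 0 ≤ j u)
    (hj_even : ∀ u, j (-u) = j u)
    (hj_int : (∫ u : ℝ, j u) = 1) (u : ℝ) :
    ∫ v in (-1:ℝ)..1, Jneum j u v ≤ 1 := by
  have hji : Integrable j := by
    by_contra h
    rw [integral_undef h] at hj_int
    norm_num at hj_int
  have ii : ∀ a b, IntervalIntegrable j volume a b := fun a b => cj.intervalIntegrable a b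
  have e : ∫ v in (-1:ℝ)..1, Jneum j u v = ∫ x in (-3 - u)..(3 - u), j x := by
    unfold Jneum
    rw [intervalIntegral.integral_add, intervalIntegral.integral_add]
    rotate_left
    · exact Continuous.intervalIntegrable (by fun_prop) _ _
    · exact Continuous.intervalIntegrable (by fun_prop) _ _
    · exact Continuous.intervalIntegrable (by fun_prop) _ _
    · exact Continuous.intervalIntegrable (by fun_prop) _ _
    have e1 : ∫ v in (-1:ℝ)..1, j (v - u) = ∫ x in (-1 - u)..(1 - u), j x :=
      intervalIntegral.integral_comp_sub_right j u
    have e2 : ∫ v in (-1:ℝ)..1, j (2 - v - u) = ∫ x in (1 - u)..(3 - u), j x := by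
      have := intervalIntegral.integral_comp_sub_left (a := -1) (b := 1) j (2 - u)
      rw [show 2 - u - 1 = 1 - u by ring, show 2 - u - -1 = 3 - u by ring] at this
      rw [← this]
      congr 1; funext x; congr 1; ring
    have e3 : ∫ v in (-1:ℝ)..1, j (-2 - v - u) = ∫ x in (-3 - u)..(-1 - u), j x := by
      have := intervalIntegral.integral_comp_sub_left (a := -1) (b := 1) j (-2 - u)
      rw [show -2 - u - 1 = -3 - u by ring, show -2 - u - -1 = -1 - u by ring] at this
      rw [← this]
      congr 1; funext x; congr 1; ring
    rw [e1, e2, e3, ← intervalIntegral.integral_add_adjacent_intervals (ii (-3 - u) (-1 - u))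
      (ii (-1 - u) (3 - u)), ← intervalIntegral.integral_add_adjacent_intervals (ii (-1 - u) (1 - u))
      (ii (1 - u) (3 - u))]
    ring
  rw [e, ← hj_int, intervalIntegral.integral_of_le (by linarith)]
  exact setIntegral_le_integral hji (Filter.Eventually.of_forall hj_nonneg)

theorem conv_sq_le {j : ℝ → ℝ} (cj : Continuous j) (hj_nonneg : ∀ u, 0 ≤ j u)
    (hj_even : ∀ u, j (-u) = j u) (hj_int : (∫ u : ℝ, j u) = 1)
    {g : ℝ → ℝ} (cg : Continuous g) :
    ∫ u in (-1:ℝ)..1, (∫ v in (-1:ℝ)..1, Kker j u v * g v) ^ 2 ≤ ∫ v in (-1:ℝ)..1, g v ^ 2 := by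
  have cK : Continuous (Function.uncurry fun u v => Kker j u v * g v) := by
    simp only [Kker, Function.uncurry_def]; fun_prop
  have cJ : Continuous (Function.uncurry fun u v => Jneum j u v * g v ^ 2) := by
    simp only [Jneum, Function.uncurry_def]; fun_prop
  have cJ0 : Continuous (Function.uncurry fun u v => Jneum j u v) := by
    simp only [Jneum, Function.uncurry_def]; fun_prop
  have Jnn : ∀ u v, 0 ≤ Jneum j u v := fun u v =>
    add_nonneg (add_nonneg (hj_nonneg _) (hj_nonneg _)) (hj_nonneg _)
  have KJ : ∀ u v, |Kker j u v| ≤ Jneum j u v := fun u v => by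
    unfold Kker Jneum
    rw [abs_le]
    constructor <;> linarith [hj_nonneg (v - u), hj_nonneg (2 - v - u), hj_nonneg (-2 - v - u)]
  have p1 : ∀ u, (∫ v in (-1:ℝ)..1, Kker j u v * g v) ^ 2 ≤ ∫ v in (-1:ℝ)..1, Jneum j u v * g v ^ 2 := by
    intro u
    set k := ∫ v in (-1:ℝ)..1, Kker j u v * g v with hk
    have h1 : ∫ v in (-1:ℝ)..1, 2 * k * (Kker j u v * g v) ≤
        ∫ v in (-1:ℝ)..1, (k ^ 2 * Jneum j u v + Jneum j u v * g v ^ 2) := by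
      refine intervalIntegral.integral_mono_on (by norm_num)
        (((slice2 cK u).const_mul _).intervalIntegrable _ _)
        ((((slice2 cJ0 u).const_mul _).add (slice2 cJ u)).intervalIntegrable _ _) fun v _ => ?_
      have hh := abs_le.1 (KJ u v)
      nlinarith [mul_nonneg (by linarith [hh.1] : 0 ≤ Jneum j u v + Kker j u v) (sq_nonneg (k - g v)),
        mul_nonneg (by linarith [hh.2] : 0 ≤ Jneum j u v - Kker j u v) (sq_nonneg (k + g v))]
    rw [intervalIntegral.integral_const_mul, ← hk, intervalIntegral.integral_add
      (((slice2 cJ0 u).const_mul _).intervalIntegrable _ _) ((slice2 cJ u).intervalIntegrable _ _),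
      intervalIntegral.integral_const_mul] at h1
    have := mul_le_mul_of_nonneg_left (Jneum_int cj hj_nonneg hj_even hj_int u) (sq_nonneg k)
    nlinarith
  calc _ ≤ ∫ u in (-1:ℝ)..1, ∫ v in (-1:ℝ)..1, Jneum j u v * g v ^ 2 :=
        intervalIntegral.integral_mono_on (by norm_num)
          (((cont_inner _ cK _ _).pow 2).intervalIntegrable _ _)
          ((cont_inner _ cJ _ _).intervalIntegrable _ _) fun u _ => p1 u
    _ = ∫ v in (-1:ℝ)..1, ∫ u in (-1:ℝ)..1, Jneum j u v * g v ^ 2 := iint_swap _ cJ _ _ _ _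
    _ ≤ _ := by
        refine intervalIntegral.integral_mono_on (by norm_num) ?_
          ((cg.pow 2).intervalIntegrable _ _) fun v _ => ?_
        · refine (cont_inner (fun v u => Jneum j u v * g v ^ 2) ?_ (-1) 1).intervalIntegrable _ _
          exact cJ.comp continuous_swap
        · rw [intervalIntegral.integral_mul_const]
          have := Jneum_int cj hj_nonneg hj_even hj_int v
          simp only [Jneum_symm hj_even v] at this
          nlinarith [sq_nonneg (g v)]

/-- the rate functional of the solution of the heat equation with the
correct boundary values is bounded by `(β²/16) ∫∫ (∂_u ρ⁰)²`. -/
theorem rate_functional_heat_solution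
    (j : ℝ → ℝ)
    (hj_smooth : ContDiff ℝ 1 j)
    (hj_nonneg : ∀ u, 0 ≤ j u)
    (hj_even : ∀ u, j (-u) = j u)
    (hj_supp : ∀ u : ℝ, 1 < |u| → j u = 0)
    (hj_int : (∫ u : ℝ, j u) = 1)
    (ρm ρp : ℝ) (hρm : ρm ∈ Ioo (0:ℝ) 1) (hρp : ρp ∈ Ioo (0:ℝ) 1)
    (T : ℝ) (hT : 0 < T) (β : ℝ) (hβ : 0 ≤ β)
    (ρ₀ : ℝ → ℝ → ℝ)
    (h_cont : Continuous (Function.uncurry ρ₀))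
    (h_t : ∀ u : ℝ, ContDiff ℝ 1 (fun t => ρ₀ t u))
    (h_u : ∀ t : ℝ, ContDiff ℝ 2 (fun u => ρ₀ t u))
    (h_du : Continuous (Function.uncurry fun t u => deriv (fun w => ρ₀ t w) u))
    (h_range : ∀ t ∈ Icc (0:ℝ) T, ∀ u ∈ Icc (-1:ℝ) 1, ρ₀ t u ∈ Icc (0:ℝ) 1)
    (h_heat : ∀ t ∈ Ioo (0:ℝ) T, ∀ u ∈ Ioo (-1:ℝ) 1,
      deriv (fun s => ρ₀ s u) t = deriv (deriv (fun w => ρ₀ t w)) u)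
    (h_bdry : ∀ t ∈ Icc (0:ℝ) T, ρ₀ t (-1) = ρm ∧ ρ₀ t 1 = ρp) :
    Ihat j β ρm ρp T ρ₀ ≤
      ENNReal.ofReal
        (β^2/16 * ∫ t in (0:ℝ)..T, ∫ u in (-1:ℝ)..1, (deriv (fun w => ρ₀ t w) u)^2) := by
  have cj := hj_smooth.continuous
  have hu1 : ∀ t, ContDiff ℝ 1 (fun u => ρ₀ t u) := fun t => (h_u t).of_le (by norm_num)
  unfold Ihat
  refine iSup₂_le fun G hG => ENNReal.ofReal_le_ofReal ?_
  obtain ⟨c0, gt, gu, ct, cu, cuu, hb⟩ := hG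
  have hw := weak_heat hT h_cont h_t h_u h_heat h_bdry c0 ct cu cuu
    (fun t u => ((gt u).differentiable (by norm_num) t).hasDerivAt)
    (fun t u => ((gu t).differentiable (by norm_num) u).hasDerivAt)
    (fun t u => by
      have h2 : ContDiff ℝ (1 + 1) (fun u => G t u) := gu t
      exact (((contDiff_succ_iff_deriv.1 h2).2.2).differentiable (by norm_num) u).hasDerivAt)
    (fun t => (hb t).1) (fun t => (hb t).2)
  unfold Afun at hw
  unfold JG ellG
  set g : ℝ → ℝ → ℝ := fun t u => deriv (fun w => ρ₀ t w) u with hg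
  set γ : ℝ → ℝ → ℝ := fun t u => deriv (fun w => G t w) u with hγ
  set k : ℝ → ℝ → ℝ := fun t u => ∫ v in (-1:ℝ)..1, Kker j u v * g t v with hk
  have ck : Continuous (Function.uncurry k) := by
    have : Continuous (Function.uncurry fun (p : ℝ × ℝ) v => Kker j p.2 v * g p.1 v) := by
      have h1 : Continuous fun q : (ℝ × ℝ) × ℝ => g q.1.1 q.2 :=
        h_du.comp (by fun_prop : Continuous fun q : (ℝ × ℝ) × ℝ => (q.1.1, q.2))
      have h2 : Continuous fun q : (ℝ × ℝ) × ℝ => Kker j q.1.2 q.2 := by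
        unfold Kker; fun_prop
      exact h2.mul h1
    exact intervalIntegral.continuous_parametric_intervalIntegral_of_continuous' this (-1) 1
  have cσ : Continuous (Function.uncurry fun t u => sigmaMob (ρ₀ t u)) := by
    have : Continuous sigmaMob := by unfold sigmaMob; fun_prop
    exact this.comp h_cont
  have ek : (∫ t in (0:ℝ)..T, ∫ u in (-1:ℝ)..1,
      sigmaMob (ρ₀ t u) * (γ t u * deriv (convJ j (fun v => ρ₀ t v)) u)) =
      ∫ t in (0:ℝ)..T, ∫ u in (-1:ℝ)..1, sigmaMob (ρ₀ t u) * (γ t u * k t u) := by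
    refine intervalIntegral.integral_congr fun t _ => ?_
    refine intervalIntegral.integral_congr fun u hu => ?_
    rw [uIcc_of_le (by norm_num)] at hu
    show _ * (_ * _) = _ * (_ * _)
    rw [deriv_convJ hj_smooth hj_even hj_supp (hu1 t) hu]
  have cA : Continuous (Function.uncurry fun t u => sigmaMob (ρ₀ t u) * (γ t u * k t u)) :=
    cmul cσ (cmul cu ck)
  have cB : Continuous (Function.uncurry fun t u => sigmaMob (ρ₀ t u) * (γ t u) ^ 2) :=
    cσ.mul (cu.pow 2)
  have cg2 : Continuous (Function.uncurry fun t u => (g t u) ^ 2) := h_du.pow 2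
  have ck2 : Continuous (Function.uncurry fun t u => (k t u) ^ 2) := ck.pow 2
  have iA := (cont_inner _ cA (-1) 1).intervalIntegrable (μ := volume) 0 T
  have iB := (cont_inner _ cB (-1) 1).intervalIntegrable (μ := volume) 0 T
  have ig := (cont_inner _ cg2 (-1) 1).intervalIntegrable (μ := volume) 0 T
  have main : ∀ t ∈ Icc (0:ℝ) T,
      -(β/2) * (∫ u in (-1:ℝ)..1, sigmaMob (ρ₀ t u) * (γ t u * k t u))
      + -(1/2) * (∫ u in (-1:ℝ)..1, sigmaMob (ρ₀ t u) * (γ t u) ^ 2)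
      ≤ β^2/16 * ∫ u in (-1:ℝ)..1, (g t u) ^ 2 := by
    intro t ht
    have h1 := conv_sq_le cj hj_nonneg hj_even hj_int (slice2 h_du t)
    have h2 : (∫ u in (-1:ℝ)..1, (-(β/2) * (sigmaMob (ρ₀ t u) * (γ t u * k t u))
        + -(1/2) * (sigmaMob (ρ₀ t u) * (γ t u) ^ 2))) ≤
        ∫ u in (-1:ℝ)..1, β^2/16 * (k t u) ^ 2 := by
      refine intervalIntegral.integral_mono_on (by norm_num)
        ((((slice2 cA t).const_mul _).add ((slice2 cB t).const_mul _)).intervalIntegrable _ _)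
        (((slice2 ck2 t).const_mul _).intervalIntegrable _ _) fun u hu => ?_
      obtain ⟨r0, r1⟩ := h_range t ht u hu
      have s0 : 0 ≤ sigmaMob (ρ₀ t u) := by
        unfold sigmaMob
        exact mul_nonneg (by linarith) (by linarith)
      have s1 : sigmaMob (ρ₀ t u) ≤ 1 / 2 := by
        unfold sigmaMob
        nlinarith [sq_nonneg (ρ₀ t u - 1 / 2)]
      nlinarith [mul_nonneg s0 (sq_nonneg (γ t u + β / 2 * k t u)),
        mul_nonneg (sub_nonneg.2 s1) (sq_nonneg (β * k t u))]
    rw [intervalIntegral.integral_add (((slice2 cA t).const_mul _).intervalIntegrable _ _)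
      (((slice2 cB t).const_mul _).intervalIntegrable _ _), intervalIntegral.integral_const_mul,
      intervalIntegral.integral_const_mul, intervalIntegral.integral_const_mul] at h2
    exact h2.trans (mul_le_mul_of_nonneg_left h1 (by positivity))
  have fin := intervalIntegral.integral_mono_on hT.le ((iA.const_mul (-(β/2))).add (iB.const_mul (-(1/2))))
    (ig.const_mul (β^2/16)) main
  rw [intervalIntegral.integral_add (iA.const_mul (-(β/2))) (iB.const_mul (-(1/2))),
    intervalIntegral.integral_const_mul, intervalIntegral.integral_const_mul,
    intervalIntegral.integral_const_mul] at fin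
  rw [ek]
  linarith


end
end
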